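/- Let Φ : ℝ^n ⇉ ℝ^m be a polyhedral sublinear mapping and 𝓛 ⊆ ℝ^m a linear subspace. Then for every b ∈ Im(Φ) and every u ∈ dom(Φ), dist(u, Φ⁻¹(b)) ≤ H(Φ|𝓛) · dist_𝓛(b, Φ(u)). -/

import Mathlib

/-!
STATEMENT 0 (Theorem 1, bound part): for a polyhedral sublinear mapping
`Φ : ℝ^n ⇉ ℝ^m` and a linear subspace `𝓛 ⊆ ℝ^m`, for every `b ∈ Im(Φ)` and
`u ∈ dom(Φ)`, `dist(u, Φ⁻¹(b)) ≤ H(Φ|𝓛) · dist_𝓛(b, Φ(u))`.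
The inequality against the infimum `dist_𝓛(b, Φ(u)) = inf{‖b-y‖ : y ∈ Φ(u), b-y ∈ 𝓛}`
(which may be `+∞` when no such `y` exists) is rendered equivalently as the
pointwise family of inequalities over all such `y`.
-/

open Metric

/-- The graph of a set-valued mapping. -/
def svGraph {n m : ℕ} (Φ : (Fin n → ℝ) → Set (Fin m → ℝ)) :
    Set ((Fin n → ℝ) × (Fin m → ℝ)) :=
  {p | p.2 ∈ Φ p.1}

/-- A polyhedral cone: an intersection of finitely many closed halfspaces through
the origin. -/
def IsPolyhedralCone {E : Type*} [AddCommGroup E] [Module ℝ E] (K : Set E) : Prop :=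
  ∃ (k : ℕ) (f : Fin k → (E →ₗ[ℝ] ℝ)), K = {x | ∀ i, 0 ≤ f i x}

/-- The tangent cone to `K` at `p`: `{z | p + t • z ∈ K for some t > 0}`. -/
def tangConeAt {E : Type*} [AddCommGroup E] [Module ℝ E] (K : Set E) (p : E) : Set E :=
  {z | ∃ t : ℝ, 0 < t ∧ p + t • z ∈ K}

/-- The collection `𝓣(K)` of tangent cones to `K` at its points. -/
def tangentCones {E : Type*} [AddCommGroup E] [Module ℝ E] (K : Set E) : Set (Set E) :=
  {T | ∃ p ∈ K, T = tangConeAt K p}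

/-- The set-valued mapping `Φ_T` with graph `T` is relatively surjective:
its image is a linear subspace. -/
def RelSurjGraph {n m : ℕ} (T : Set ((Fin n → ℝ) × (Fin m → ℝ))) : Prop :=
  ∃ W : Submodule ℝ (Fin m → ℝ), {y | ∃ x, (x, y) ∈ T} = (W : Set (Fin m → ℝ))

/-- `‖Φ_T⁻¹ | 𝓛‖ = max_{y ∈ Im(Φ_T) ∩ 𝓛, ‖y‖ ≤ 1} min_{x ∈ Φ_T⁻¹(y)} ‖x‖`. -/
noncomputable def nrmInvRes {n m : ℕ} (T : Set ((Fin n → ℝ) × (Fin m → ℝ)))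
    (L : Submodule ℝ (Fin m → ℝ)) : ℝ :=
  sSup {t | ∃ y : Fin m → ℝ, (∃ x, (x, y) ∈ T) ∧ y ∈ L ∧ ‖y‖ ≤ 1 ∧
    t = sInf {r | ∃ x : Fin n → ℝ, (x, y) ∈ T ∧ r = ‖x‖}}

/-- The Hoffman constant `H(Φ|𝓛) = max_{T ∈ S(Φ)} ‖Φ_T⁻¹|𝓛‖`. -/
noncomputable def HoffSV {n m : ℕ} (Φ : (Fin n → ℝ) → Set (Fin m → ℝ))
    (L : Submodule ℝ (Fin m → ℝ)) : ℝ :=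
  sSup {t | ∃ T ∈ tangentCones (svGraph Φ), RelSurjGraph T ∧ t = nrmInvRes T L}

section PolyhedralCone

variable {E : Type*} [AddCommGroup E] [Module ℝ E] {k : ℕ} (f : Fin k → (E →ₗ[ℝ] ℝ))

open Filter Topology in
/-- The tangent cone to a polyhedral cone at a point is cut out by the active constraints. -/
theorem tangConeAt_eq_active {p : E} (hp : ∀ i, 0 ≤ f i p) :
    tangConeAt {x | ∀ i, 0 ≤ f i x} p = {z | ∀ i, f i p = 0 → 0 ≤ f i z} := by
  ext z
  simp only [tangConeAt, Set.mem_ofPred_eq, map_add, map_smul, smul_eq_mul]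
  constructor
  · rintro ⟨t, ht, h⟩ i hi
    have := h i
    rw [hi, zero_add] at this
    exact nonneg_of_mul_nonneg_right this ht
  · intro h
    have key : ∀ᶠ t : ℝ in 𝓝[>] 0, ∀ i, 0 ≤ f i p + t * f i z := by
      rw [eventually_all]
      intro i
      rcases (hp i).eq_or_lt with hi | hi
      · filter_upwards [self_mem_nhdsWithin] with t ht
        rw [← hi, zero_add]
        exact mul_nonneg (le_of_lt ht) (h i hi.symm)
      · have hc : ContinuousAt (fun t : ℝ => f i p + t * f i z) 0 := by fun_prop
        have h0 : 0 < f i p + 0 * f i z := by simpa using hi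
        exact nhdsWithin_le_nhds ((hc.eventually (lt_mem_nhds h0)).mono fun _ => le_of_lt)
    obtain ⟨t, ht, ht0⟩ := (key.and self_mem_nhdsWithin).exists
    exact ⟨t, ht0, ht⟩

theorem finite_tangentCones : (tangentCones {x | ∀ i, 0 ≤ f i x}).Finite := by
  refine (Set.finite_range fun I : Set (Fin k) => {z | ∀ i ∈ I, 0 ≤ f i z}).subset ?_
  rintro T ⟨p, hp, rfl⟩
  exact ⟨{i | f i p = 0}, (tangConeAt_eq_active f hp).symm⟩

/-- A polyhedral cone has a point from which one can move a little in the direction opposite to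
any of its elements. -/
theorem exists_core_point :
    ∃ p, (∀ i, 0 ≤ f i p) ∧
      ∀ z, (∀ i, 0 ≤ f i z) → ∃ δ : ℝ, 0 < δ ∧ ∀ i, 0 ≤ f i (p - δ • z) := by
  have h : ∀ i, ∃ w, (∀ j, 0 ≤ f j w) ∧ ∀ z, (∀ j, 0 ≤ f j z) → f i w = 0 → f i z = 0 := by
    intro i
    by_cases hi : ∃ w, (∀ j, 0 ≤ f j w) ∧ 0 < f i w
    · obtain ⟨w, hw, hpos⟩ := hi
      exact ⟨w, hw, fun _ _ h0 => absurd h0 hpos.ne'⟩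
    · push Not at hi
      exact ⟨0, by simp, fun z hz _ => le_antisymm (hi z hz) (hz i)⟩
  choose w hw hz using h
  have hp : ∀ i, 0 ≤ f i (∑ j, w j) := fun i => by
    rw [map_sum]; exact Finset.sum_nonneg fun j _ => hw j i
  refine ⟨∑ j, w j, hp, fun z hzK => ?_⟩
  have hmem : -z ∈ tangConeAt {x | ∀ i, 0 ≤ f i x} (∑ j, w j) := by
    rw [tangConeAt_eq_active f hp]
    intro i hi
    rw [map_sum, Finset.sum_eq_zero_iff_of_nonneg fun j _ => hw j i] at hi
    rw [map_neg, hz i z hzK (hi i (Finset.mem_univ i)), neg_zero]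
  obtain ⟨δ, hδ, hmem⟩ := hmem
  exact ⟨δ, hδ, fun i => by simpa [sub_eq_add_neg] using hmem i⟩

end PolyhedralCone

theorem isClosed_polyhedral {E : Type*} [NormedAddCommGroup E] [NormedSpace ℝ E]
    [FiniteDimensional ℝ E] {ι : Type*} (f : ι → (E →ₗ[ℝ] ℝ)) (I : Set ι) :
    IsClosed {z | ∀ i ∈ I, 0 ≤ f i z} := by
  simp only [Set.ofPred_forall]
  exact isClosed_iInter fun i => isClosed_iInter fun _ =>
    isClosed_le continuous_const (f i).continuous_of_finiteDimensional

/-- A polyhedral cone whose image under the second projection is a subspace has uniformly bounded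
least-norm preimages. -/
theorem exists_preimage_norm_le {n m : ℕ} {T : Set ((Fin n → ℝ) × (Fin m → ℝ))}
    (hzero : 0 ∈ T) (hadd : ∀ z ∈ T, ∀ w ∈ T, z + w ∈ T)
    (hsmul : ∀ c : ℝ, 0 ≤ c → ∀ z ∈ T, c • z ∈ T) (hT : RelSurjGraph T) :
    ∃ C : ℝ, ∀ y, (∃ x, (x, y) ∈ T) → ‖y‖ ≤ 1 → ∃ x, (x, y) ∈ T ∧ ‖x‖ ≤ C := by
  obtain ⟨W, hW⟩ := hT
  have hpre : ∀ y : W, ∃ x, (x, (y : Fin m → ℝ)) ∈ T := fun y => by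
    have := y.2
    rwa [← SetLike.mem_coe, ← hW] at this
  choose g hg using hpre
  let e := Module.finBasis ℝ W
  let φ : Fin (Module.finrank ℝ W) → (W →L[ℝ] ℝ) := fun i => (e.coord i).toContinuousLinearMap
  refine ⟨∑ i, (‖φ i‖ * ‖g (e i)‖ + ‖φ i‖ * ‖g (-e i)‖), fun y hy hy1 => ?_⟩
  have hyW : y ∈ W := by rw [← SetLike.mem_coe, ← hW]; exact hy
  let y' : W := ⟨y, hyW⟩
  have hφ : ∀ i, |φ i y'| ≤ ‖φ i‖ := fun i =>
    ((φ i).le_opNorm y').trans (mul_le_of_le_one_right (norm_nonneg _) hy1)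
  have hsum : ∀ s : Finset (Fin (Module.finrank ℝ W)),
      ∑ i ∈ s, ((φ i y')⁺ • (g (e i), (e i : Fin m → ℝ)) +
        (φ i y')⁻ • (g (-e i), ((-e i : W) : Fin m → ℝ))) ∈ T := by
    intro s
    induction s using Finset.induction_on with
    | empty => simpa using hzero
    | insert i s hi ih =>
      rw [Finset.sum_insert hi]
      exact hadd _ (hadd _ (hsmul _ (posPart_nonneg _) _ (hg _)) _
        (hsmul _ (negPart_nonneg _) _ (hg _))) _ ih
  have hmem := hsum Finset.univ
  refine ⟨∑ i, ((φ i y')⁺ • g (e i) + (φ i y')⁻ • g (-e i)), ?_, ?_⟩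
  · convert hmem using 1
    ext j
    · simp [Prod.fst_sum]
    · have hy' : y = ((∑ i, φ i y' • e i : W) : Fin m → ℝ) :=
        congrArg Subtype.val (e.sum_repr y').symm
      rw [hy']
      simp only [Prod.snd_sum, Prod.snd_add, Prod.smul_snd, Submodule.coe_sum, Finset.sum_apply]
      refine Finset.sum_congr rfl fun i _ => ?_
      simp only [Submodule.coe_smul, Submodule.coe_neg, Pi.smul_apply, Pi.add_apply, Pi.neg_apply,
        smul_eq_mul]
      conv_lhs => rw [← posPart_sub_negPart (φ i y')]
      ring
  · refine (norm_sum_le _ _).trans (Finset.sum_le_sum fun i _ => (norm_add_le _ _).trans ?_)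
    rw [norm_smul, norm_smul, Real.norm_of_nonneg (posPart_nonneg _),
      Real.norm_of_nonneg (negPart_nonneg _)]
    gcongr
    · exact (sup_le (le_abs_self _) (abs_nonneg _)).trans (hφ i)
    · exact (sup_le (neg_le_abs _) (abs_nonneg _)).trans (hφ i)

section Graph

variable {n m k : ℕ} (f : Fin k → ((Fin n → ℝ) × (Fin m → ℝ) →ₗ[ℝ] ℝ))

/-- The tangent cone is relatively surjective at any point whose second component is, up to a
positive multiple of the core point `p`, the second component of an element of the cone. -/
theorem relSurjGraph_tangConeAt {p c a : (Fin n → ℝ) × (Fin m → ℝ)}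
    (hp : ∀ z, (∀ i, 0 ≤ f i z) → ∃ δ : ℝ, 0 < δ ∧ ∀ i, 0 ≤ f i (p - δ • z))
    (hc : ∀ i, 0 ≤ f i c) (ha : ∀ i, 0 ≤ f i a) {ε : ℝ} (hε : 0 < ε)
    (hca : a.2 = c.2 + ε • p.2) :
    RelSurjGraph (tangConeAt {x | ∀ i, 0 ≤ f i x} a) := by
  have hneg : ∀ z ∈ tangConeAt {x | ∀ i, 0 ≤ f i x} a,
      ∃ x, (x, -z.2) ∈ tangConeAt {x | ∀ i, 0 ≤ f i x} a := by
    rintro z ⟨t, ht, hz⟩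
    obtain ⟨δ, hδ, hpδ⟩ := hp _ hz
    set w := (ε * δ * t)⁻¹ • (c + ε • (p - δ • (a + t • z)) - a + (ε * δ) • a) with hw
    have hw2 : w.2 = -z.2 := by
      have : (c + ε • (p - δ • (a + t • z)) - a + (ε * δ) • a).2 = -((ε * δ * t) • z.2) := by
        simp only [Prod.snd_add, Prod.snd_sub, Prod.smul_snd, hca]
        module
      rw [hw, Prod.smul_snd, this, smul_neg, inv_smul_smul₀ (by positivity)]
    refine ⟨w.1, ?_⟩
    rw [← hw2, Prod.mk.eta, tangConeAt_eq_active f ha]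
    intro i hi
    have h1 := hc i
    have h2 := hpδ i
    rw [hw, map_smul, map_add, map_sub, map_add, map_smul, map_smul, hi]
    simp only [smul_eq_mul, mul_zero, sub_zero, add_zero]
    positivity
  rw [tangConeAt_eq_active f ha] at hneg ⊢
  refine ⟨{ carrier := {y | ∃ x, (x, y) ∈ {z | ∀ i, f i a = 0 → 0 ≤ f i z}}
            zero_mem' := ⟨0, fun i _ => (map_zero (f i)).ge⟩
            add_mem' := ?_
            smul_mem' := ?_ }, rfl⟩
  · rintro y y' ⟨x, hx⟩ ⟨x', hx'⟩
    refine ⟨x + x', fun i hi => ?_⟩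
    rw [← Prod.mk_add_mk, map_add]
    exact add_nonneg (hx i hi) (hx' i hi)
  · rintro r y ⟨x, hx⟩
    rcases le_total 0 r with hr | hr
    · refine ⟨r • x, fun i hi => ?_⟩
      rw [← Prod.smul_mk, map_smul]
      exact mul_nonneg hr (hx i hi)
    · obtain ⟨x', hx'⟩ := hneg _ hx
      refine ⟨(-r) • x', fun i hi => ?_⟩
      have : r • y = (-r) • (-y) := by simp
      rw [this, ← Prod.smul_mk, map_smul]
      exact mul_nonneg (neg_nonneg.2 hr) (hx' i hi)

theorem sInf_norm_fiber_le {T : Set ((Fin n → ℝ) × (Fin m → ℝ))} {x : Fin n → ℝ} {y : Fin m → ℝ}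
    (h : (x, y) ∈ T) : sInf {r | ∃ x : Fin n → ℝ, (x, y) ∈ T ∧ r = ‖x‖} ≤ ‖x‖ :=
  csInf_le ⟨0, by rintro _ ⟨x, -, rfl⟩; exact norm_nonneg x⟩ ⟨x, h, rfl⟩

/-- Every element of `Im Φ_T ∩ L` has a preimage of norm at most `‖Φ_T⁻¹|L‖` times its own. -/
theorem exists_preimage_norm_le_nrmInvRes {a : (Fin n → ℝ) × (Fin m → ℝ)}
    (ha : ∀ i, 0 ≤ f i a) (L : Submodule ℝ (Fin m → ℝ))
    (hT : RelSurjGraph (tangConeAt {x | ∀ i, 0 ≤ f i x} a)) {v : Fin m → ℝ} (hvL : v ∈ L)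
    (hv : ∃ x, (x, v) ∈ tangConeAt {x | ∀ i, 0 ≤ f i x} a) :
    ∃ w, (w, v) ∈ tangConeAt {x | ∀ i, 0 ≤ f i x} a ∧
      ‖w‖ ≤ nrmInvRes (tangConeAt {x | ∀ i, 0 ≤ f i x} a) L * ‖v‖ := by
  rw [tangConeAt_eq_active f ha] at hT hv ⊢
  set T := {z | ∀ i, f i a = 0 → 0 ≤ f i z} with hTdef
  have hsmul : ∀ c : ℝ, 0 ≤ c → ∀ z ∈ T, c • z ∈ T := fun c hc z hz i hi => by
    rw [map_smul]; exact mul_nonneg hc (hz i hi)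
  have hzero : (0 : (Fin n → ℝ) × (Fin m → ℝ)) ∈ T := fun i _ => (map_zero (f i)).ge
  rcases eq_or_ne v 0 with rfl | hv0
  · exact ⟨0, hzero, by simp⟩
  have hvpos : 0 < ‖v‖ := norm_pos_iff.2 hv0
  obtain ⟨C, hC⟩ := exists_preimage_norm_le hzero
    (fun z hz w hw i hi => by rw [map_add]; exact add_nonneg (hz i hi) (hw i hi)) hsmul hT
  obtain ⟨x, hx⟩ := hv
  have hclosed : IsClosed {x | (x, ‖v‖⁻¹ • v) ∈ T} :=
    (isClosed_polyhedral f {i | f i a = 0}).preimage (by fun_prop)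
  have hne : {x | (x, ‖v‖⁻¹ • v) ∈ T}.Nonempty :=
    ⟨‖v‖⁻¹ • x, hsmul _ (by positivity) _ hx⟩
  obtain ⟨w, hwT, hw⟩ := hclosed.exists_infDist_eq_dist hne 0
  have hmin : ‖w‖ ≤ sInf {r | ∃ x : Fin n → ℝ, (x, ‖v‖⁻¹ • v) ∈ T ∧ r = ‖x‖} := by
    refine le_csInf ⟨_, w, hwT, rfl⟩ ?_
    rintro _ ⟨x', hx', rfl⟩
    have := Metric.infDist_le_dist_of_mem (x := (0 : Fin n → ℝ))
      (show x' ∈ {x | (x, ‖v‖⁻¹ • v) ∈ T} from hx')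
    rw [hw] at this
    simpa using this
  have hsup : sInf {r | ∃ x : Fin n → ℝ, (x, ‖v‖⁻¹ • v) ∈ T ∧ r = ‖x‖} ≤ nrmInvRes T L := by
    refine le_csSup ⟨C, ?_⟩ ⟨_, ⟨w, hwT⟩, L.smul_mem _ hvL, ?_, rfl⟩
    · rintro _ ⟨y, hy, -, hy1, rfl⟩
      obtain ⟨x', hx', hle⟩ := hC y hy hy1
      exact (sInf_norm_fiber_le hx').trans hle
    · rw [norm_smul, norm_inv, norm_norm, inv_mul_cancel₀ hvpos.ne']
  refine ⟨‖v‖ • w, ?_, ?_⟩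
  · have := hsmul ‖v‖ hvpos.le _ hwT
    rwa [Prod.smul_mk, smul_inv_smul₀ hvpos.ne'] at this
  · rw [norm_smul, norm_norm, mul_comm]
    gcongr
    exact hmin.trans hsup

open Set in
/-- If every point of the cone lying over the half-open segment `[y, y + v)` can be moved along the
segment at rate at most `M`, then the whole segment can be traversed at that rate. -/
theorem exists_preimage_of_local_step {M : ℝ} {u : Fin n → ℝ} {y v : Fin m → ℝ}
    (hu : ∀ i, 0 ≤ f i (u, y))
    (hstep : ∀ t ∈ Ico (0 : ℝ) 1, ∀ x, (∀ i, 0 ≤ f i (x, y + t • v)) →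
      ∃ w, (w, v) ∈ tangConeAt {x | ∀ i, 0 ≤ f i x} (x, y + t • v) ∧ ‖w‖ ≤ M) :
    ∃ x, (∀ i, 0 ≤ f i (x, y + v)) ∧ ‖x - u‖ ≤ M := by
  have hM : 0 ≤ M := by
    obtain ⟨w, -, hw⟩ := hstep 0 (by simp) u (by simpa using hu)
    exact (norm_nonneg w).trans hw
  set S : Set (ℝ × (Fin n → ℝ)) :=
    {q | (∀ i, 0 ≤ f i (q.2, y + q.1 • v)) ∧ ‖q.2 - u‖ ≤ M * q.1} with hS
  have hSclosed : IsClosed S := by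
    rw [hS, ofPred_and]
    refine IsClosed.inter ?_ (isClosed_le (by fun_prop) (by fun_prop))
    have := (isClosed_polyhedral f univ).preimage
      (show Continuous fun q : ℝ × (Fin n → ℝ) => (q.2, y + q.1 • v) by fun_prop)
    simpa using this
  have hcomp : IsCompact ((Icc (0 : ℝ) 1 ×ˢ Metric.closedBall u M) ∩ S) :=
    (isCompact_Icc.prod (isCompact_closedBall u M)).inter_right hSclosed
  have hne : ((Icc (0 : ℝ) 1 ×ˢ Metric.closedBall u M) ∩ S).Nonempty :=
    ⟨(0, u), ⟨by simp, by simpa using hM⟩, by simpa using hu, by simp⟩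
  obtain ⟨⟨t, x⟩, ⟨⟨ht, -⟩, hxK, hxM⟩, hmax⟩ :=
    hcomp.exists_isMaxOn hne continuous_fst.continuousOn
  simp only at ht hxK hxM
  rcases ht.2.eq_or_lt with rfl | ht1
  · exact ⟨x, by simpa using hxK, by simpa using hxM⟩
  exfalso
  obtain ⟨w, hw, hwM⟩ := hstep t ⟨ht.1, ht1⟩ x hxK
  obtain ⟨s, hs, hsK⟩ := hw
  set r := min s (1 - t) with hr
  have hr0 : 0 < r := lt_min hs (sub_pos.2 ht1)
  have hr1 : t + r ≤ 1 := by linarith [min_le_right s (1 - t)]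
  have hrs : r ≤ s := min_le_left _ _
  have hnorm : ‖x + r • w - u‖ ≤ M * (t + r) := by
    calc ‖x + r • w - u‖ = ‖(x - u) + r • w‖ := by congr 1; abel
      _ ≤ ‖x - u‖ + r * ‖w‖ := by
        refine (norm_add_le _ _).trans_eq ?_
        rw [norm_smul, Real.norm_of_nonneg hr0.le]
      _ ≤ M * t + r * M := by gcongr
      _ = M * (t + r) := by ring
  have hmem : (t + r, x + r • w) ∈ (Icc (0 : ℝ) 1 ×ˢ Metric.closedBall u M) ∩ S := by
    refine ⟨⟨⟨by linarith [ht.1], hr1⟩, ?_⟩, fun i => ?_, hnorm⟩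
    · rw [mem_closedBall_iff_norm]
      exact hnorm.trans (mul_le_of_le_one_right hM hr1)
    · have hpt : (x + r • w, y + (t + r) • v) = (x, y + t • v) + r • (w, v) := by
        rw [Prod.smul_mk, Prod.mk_add_mk, add_smul, add_assoc]
      have h1 := hxK i
      have h2 := hsK i
      rw [map_add, map_smul, smul_eq_mul] at h2
      rw [hpt, map_add, map_smul, smul_eq_mul]
      rcases le_total 0 (f i (w, v)) with h | h
      · positivity
      · nlinarith
  have := hmax hmem
  simp only [mem_ofPred_eq] at this
  linarith

open Set in
/-- Approximate solutions of a perturbed system converge to solutions of the unperturbed one. -/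
theorem exists_preimage_of_perturbed {M : ℝ} {u : Fin n → ℝ} {b : Fin m → ℝ}
    {p : (Fin n → ℝ) × (Fin m → ℝ)}
    (h : ∀ ε ∈ Ioo (0 : ℝ) 1, ∃ x, (∀ i, 0 ≤ f i (x, b + ε • p.2)) ∧ ‖x - (u + ε • p.1)‖ ≤ M) :
    ∃ x, (∀ i, 0 ≤ f i (x, b)) ∧ ‖x - u‖ ≤ M := by
  set S : Set (ℝ × (Fin n → ℝ)) :=
    {q | (∀ i, 0 ≤ f i (q.2, b + q.1 • p.2)) ∧ ‖q.2 - (u + q.1 • p.1)‖ ≤ M} with hS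
  have hSclosed : IsClosed S := by
    rw [hS, ofPred_and]
    refine IsClosed.inter ?_ (isClosed_le (by fun_prop) (by fun_prop))
    have := (isClosed_polyhedral f univ).preimage
      (show Continuous fun q : ℝ × (Fin n → ℝ) => (q.2, b + q.1 • p.2) by fun_prop)
    simpa using this
  have hcomp : IsCompact ((Icc (0 : ℝ) 1 ×ˢ Metric.closedBall u (M + ‖p.1‖)) ∩ S) :=
    (isCompact_Icc.prod (isCompact_closedBall _ _)).inter_right hSclosed
  have hsub : Ioo (0 : ℝ) 1 ⊆
      Prod.fst '' ((Icc (0 : ℝ) 1 ×ˢ Metric.closedBall u (M + ‖p.1‖)) ∩ S) := by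
    intro ε hε
    obtain ⟨x, hxK, hx⟩ := h ε hε
    refine ⟨(ε, x), ⟨⟨Ioo_subset_Icc_self hε, ?_⟩, hxK, hx⟩, rfl⟩
    rw [mem_closedBall_iff_norm]
    calc ‖x - u‖ = ‖(x - (u + ε • p.1)) + ε • p.1‖ := by congr 1; abel
      _ ≤ ‖x - (u + ε • p.1)‖ + ε * ‖p.1‖ := by
        refine (norm_add_le _ _).trans_eq ?_
        rw [norm_smul, Real.norm_of_nonneg hε.1.le]
      _ ≤ M + ‖p.1‖ := add_le_add hx (mul_le_of_le_one_left (norm_nonneg _) hε.2.le)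
  have h0 := (hcomp.image continuous_fst).isClosed.closure_subset_iff.2 hsub
    (show (0 : ℝ) ∈ closure (Ioo 0 1) by rw [closure_Ioo zero_ne_one]; simp)
  obtain ⟨⟨_, x⟩, ⟨-, hxK, hx⟩, rfl⟩ := h0
  exact ⟨x, by simpa using hxK, by simpa using hx⟩

end Graph

theorem hoffman_bound {n m : ℕ} (Φ : (Fin n → ℝ) → Set (Fin m → ℝ))
    (hK : IsPolyhedralCone (svGraph Φ)) (L : Submodule ℝ (Fin m → ℝ))
    (b : Fin m → ℝ) (hb : ∃ x, b ∈ Φ x) (u : Fin n → ℝ) (hu : (Φ u).Nonempty) :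
    ∀ y ∈ Φ u, b - y ∈ L →
      infDist u {x | b ∈ Φ x} ≤ HoffSV Φ L * ‖b - y‖ := by
  intro y hy hL
  obtain ⟨k, f, hf⟩ := hK
  have hmem : ∀ x z, z ∈ Φ x ↔ ∀ i, 0 ≤ f i (x, z) := fun x z => by
    change (x, z) ∈ svGraph Φ ↔ _
    rw [hf]; rfl
  obtain ⟨xb, hxb⟩ := hb
  rw [hmem] at hxb hy
  obtain ⟨p, hpK, hp⟩ := exists_core_point f
  have hle : ∀ T ∈ tangentCones (svGraph Φ), RelSurjGraph T → nrmInvRes T L ≤ HoffSV Φ L := by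
    intro T hT hTs
    refine le_csSup (Set.Finite.bddAbove ?_) ⟨T, hT, hTs, rfl⟩
    have hfin : (tangentCones (svGraph Φ)).Finite := by rw [hf]; exact finite_tangentCones f
    refine (hfin.image fun T => nrmInvRes T L).subset ?_
    rintro _ ⟨T, hT, -, rfl⟩
    exact ⟨T, hT, rfl⟩
  obtain ⟨x, hxK, hx⟩ : ∃ x, (∀ i, 0 ≤ f i (x, b)) ∧ ‖x - u‖ ≤ HoffSV Φ L * ‖b - y‖ := by
    refine exists_preimage_of_perturbed f (p := p) fun ε hε => ?_
    have hpert : ∀ z, (∀ i, 0 ≤ f i z) → ∀ i, 0 ≤ f i (z + ε • p) := fun z hz i => by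
      rw [map_add, map_smul]
      exact add_nonneg (hz i) (mul_nonneg hε.1.le (hpK i))
    have hb' : b + ε • p.2 = (y + ε • p.2) + (b - y) := by abel
    rw [hb']
    refine exists_preimage_of_local_step f (hpert _ hy) fun t ht x hxK => ?_
    have hc : ∀ i, 0 ≤ f i ((1 - t) • (u, y) + t • (xb, b)) := fun i => by
      rw [map_add, map_smul, map_smul]
      exact add_nonneg (mul_nonneg (sub_nonneg.2 ht.2.le) (hy i)) (mul_nonneg ht.1 (hxb i))
    have hTs := relSurjGraph_tangConeAt f hp hc hxK hε.1 (by
      simp only [Prod.snd_add, Prod.smul_snd]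
      module)
    have ht1 : 1 - t ≠ 0 := (sub_pos.2 ht.2).ne'
    obtain ⟨w, hw, hwle⟩ := exists_preimage_norm_le_nrmInvRes f hxK L hTs hL
      ⟨(1 - t)⁻¹ • (xb + ε • p.1 - x), 1 - t, sub_pos.2 ht.2, fun i => by
        convert hpert _ hxb i using 2
        ext1
        · simp only [Prod.fst_add, Prod.smul_fst, smul_inv_smul₀ ht1]
          abel
        · simp only [Prod.snd_add, Prod.smul_snd]
          module⟩
    refine ⟨w, hw, hwle.trans ?_⟩
    gcongr
    refine hle _ ⟨(x, y + ε • p.2 + t • (b - y)), ?_, ?_⟩ hTs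
    · rw [hf]; exact hxK
    · rw [hf]
  refine (infDist_le_dist_of_mem (show x ∈ {x | b ∈ Φ x} from (hmem x b).2 hxK)).trans ?_
  rwa [dist_comm, dist_eq_norm]
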